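/- Let b > 0 be a constant, let f : ℂ → ℂ be holomorphic (differentiable on all of ℂ), set u(x,y) := 2 Re f(x + iy) and Ĥ(v,x,y) := x ∂_x u(x,y) − u(x,y). Then the Siklos metric g = (b²x²)^{−1} ĝ built from this Ĥ on U = {x > 0} is Einstein: its Ricci tensor satisfies R_{μν} = 3 b² g_{μν} at every point of U. -/

import Mathlib

noncomputable section

/-- Points of ℝ⁴, with coordinates (u,v,x,y) indexed by 0,1,2,3. -/
abbrev Pt : Type := Fin 4 → ℝ

/-- Partial derivative of a scalar function along the μ-th coordinate. -/
def pd (μ : Fin 4) (f : Pt → ℝ) (p : Pt) : ℝ :=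
  fderiv ℝ f p (Pi.single μ 1)

/-- `f` is independent of the μ-th coordinate. -/
def IndepCoord (μ : Fin 4) (f : Pt → ℝ) : Prop :=
  ∀ p t, f (Function.update p μ t) = f p

/-- Christoffel symbols Γ^λ_{μν} of a metric `g` with inverse `ginv`:
Γ^λ_{μν} = (1/2) Σ_ρ g^{λρ} (∂_μ g_{ρν} + ∂_ν g_{ρμ} − ∂_ρ g_{μν}). -/
def Christoffel (g ginv : Fin 4 → Fin 4 → Pt → ℝ) (l μ ν : Fin 4) (p : Pt) : ℝ :=
  (1/2) * ∑ ρ, ginv l ρ p * (pd μ (g ρ ν) p + pd ν (g ρ μ) p - pd ρ (g μ ν) p)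

/-- Ricci tensor:
R_{μν} = Σ_ρ ∂_ρ Γ^ρ_{μν} − Σ_ρ ∂_ν Γ^ρ_{ρμ}
        + Σ_{ρσ} (Γ^ρ_{ρσ} Γ^σ_{μν} − Γ^ρ_{νσ} Γ^σ_{ρμ}). -/
def RicciT (g ginv : Fin 4 → Fin 4 → Pt → ℝ) (μ ν : Fin 4) (p : Pt) : ℝ :=
  (∑ ρ, pd ρ (Christoffel g ginv ρ μ ν) p)
    - (∑ ρ, pd ν (Christoffel g ginv ρ ρ μ) p)
    + ∑ ρ, ∑ σ,
        (Christoffel g ginv ρ ρ σ p * Christoffel g ginv σ μ ν p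
          - Christoffel g ginv ρ ν σ p * Christoffel g ginv σ ρ μ p)

/-- Scalar curvature R = Σ_{μν} g^{μν} R_{μν}. -/
def ScalarCurv (g ginv : Fin 4 → Fin 4 → Pt → ℝ) (p : Pt) : ℝ :=
  ∑ μ, ∑ ν, ginv μ ν p * RicciT g ginv μ ν p

/-- The pp-wave metric ĝ: ĝ_{uv} = ĝ_{vu} = 1, ĝ_{vv} = Ĥ, ĝ_{xx} = ĝ_{yy} = −1. -/
def ppMetric (H : Pt → ℝ) (μ ν : Fin 4) (p : Pt) : ℝ :=
  if μ = 0 ∧ ν = 1 then 1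
  else if μ = 1 ∧ ν = 0 then 1
  else if μ = 1 ∧ ν = 1 then H p
  else if μ = 2 ∧ ν = 2 then -1
  else if μ = 3 ∧ ν = 3 then -1
  else 0

/-- The inverse pp-wave metric: ĝ^{uu} = −Ĥ, ĝ^{uv} = ĝ^{vu} = 1, ĝ^{xx} = ĝ^{yy} = −1. -/
def ppMetricInv (H : Pt → ℝ) (μ ν : Fin 4) (p : Pt) : ℝ :=
  if μ = 0 ∧ ν = 0 then -H p
  else if μ = 0 ∧ ν = 1 then 1
  else if μ = 1 ∧ ν = 0 then 1
  else if μ = 2 ∧ ν = 2 then -1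
  else if μ = 3 ∧ ν = 3 then -1
  else 0

/-- The covector k = dv. -/
def kvec (μ : Fin 4) : ℝ := if μ = 1 then 1 else 0

/-- The covector e = dx. -/
def evec (μ : Fin 4) : ℝ := if μ = 2 then 1 else 0

/-- The Siklos metric g = (b²x²)⁻¹ ĝ (meaningful on the domain U = {x > 0}). -/
def siklosMetric (b : ℝ) (H : Pt → ℝ) (μ ν : Fin 4) (p : Pt) : ℝ :=
  (b ^ 2 * (p 2) ^ 2)⁻¹ * ppMetric H μ ν p

/-- The inverse of the Siklos metric, g^{μν} = b²x² ĝ^{μν}. -/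
def siklosMetricInv (b : ℝ) (H : Pt → ℝ) (μ ν : Fin 4) (p : Pt) : ℝ :=
  b ^ 2 * (p 2) ^ 2 * ppMetricInv H μ ν p

/-- u(x,y) = 2 Re f(x + iy) for f : ℂ → ℂ, as a function on ℝ². -/
def uRe (f : ℂ → ℂ) (q : ℝ × ℝ) : ℝ :=
  2 * (f (q.1 + q.2 * Complex.I)).re

/-- The partial derivative ∂_x u on ℝ². -/
def uRex (f : ℂ → ℂ) (q : ℝ × ℝ) : ℝ :=
  fderiv ℝ (uRe f) q (1, 0)

/-- The Siklos profile Ĥ(v,x,y) = x ∂_x u(x,y) − u(x,y) (independent of u and v). -/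
def siklosProfile (f : ℂ → ℂ) (p : Pt) : ℝ :=
  p 2 * uRex f (p 2, p 3) - uRe f (p 2, p 3)

/-- Real part profile `2 Re h(x+iy)` on ℝ⁴. -/
def reP (h : ℂ → ℂ) (p : Pt) : ℝ := 2 * (h (p 2 + p 3 * Complex.I)).re

/-- The coordinate `x + iy` as a continuous linear map. -/
def zL : Pt →L[ℝ] ℂ :=
  Complex.ofRealCLM.comp (ContinuousLinearMap.proj (R := ℝ) (φ := fun _ : Fin 4 => ℝ) 2)
    + Complex.I • Complex.ofRealCLM.comp
      (ContinuousLinearMap.proj (R := ℝ) (φ := fun _ : Fin 4 => ℝ) 3)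

lemma zL_apply (p : Pt) : zL p = p 2 + p 3 * Complex.I := by
  simp [zL, mul_comm]

lemma reP_eq (h : ℂ → ℂ) : reP h = fun p => 2 * (h (zL p)).re := by
  funext p; rw [reP, zL_apply]

lemma reP_hasFDerivAt (h : ℂ → ℂ) (hh : Differentiable ℂ h) (p : Pt) :
    HasFDerivAt (reP h) ((2 : ℝ) • Complex.reCLM.comp
      (((fderiv ℂ h (zL p)).restrictScalars ℝ).comp zL)) p := by
  rw [reP_eq]
  have h1 := (((hh (zL p)).hasFDerivAt).restrictScalars ℝ).comp p zL.hasFDerivAt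
  exact (Complex.reCLM.hasFDerivAt.comp p h1).const_mul 2

lemma reP_diff (h : ℂ → ℂ) (hh : Differentiable ℂ h) : Differentiable ℝ (reP h) :=
  fun p => (reP_hasFDerivAt h hh p).differentiableAt

lemma pd_reP (h : ℂ → ℂ) (hh : Differentiable ℂ h) (μ : Fin 4) (p : Pt) :
    pd μ (reP h) p = if μ = 2 then reP (deriv h) p
      else if μ = 3 then reP (fun z => Complex.I * deriv h z) p else 0 := by
  have key : ∀ w : ℂ, fderiv ℂ h (zL p) w = w * deriv h (zL p) := by
    intro w
    have := (fderiv ℂ h (zL p)).map_smul w 1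
    simp
  rw [pd, (reP_hasFDerivAt h hh p).fderiv]
  simp only [ContinuousLinearMap.smul_apply, ContinuousLinearMap.comp_apply,
    ContinuousLinearMap.coe_restrictScalars', key, reP_eq]
  rw [zL_apply (Pi.single μ 1)]
  fin_cases μ <;> simp

lemma coord_hasFDerivAt (i : Fin 4) (p : Pt) : HasFDerivAt (fun q : Pt => q i)
    (ContinuousLinearMap.proj (R := ℝ) (φ := fun _ : Fin 4 => ℝ) i) p :=
  (ContinuousLinearMap.proj (R := ℝ) (φ := fun _ : Fin 4 => ℝ) i).hasFDerivAt

lemma pd_xmul (F : Pt → ℝ) (hF : Differentiable ℝ F) (μ : Fin 4) (p : Pt) :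
    pd μ (fun q => q 2 * F q) p = p 2 * pd μ F p + (if μ = 2 then F p else 0) := by
  have h := ((coord_hasFDerivAt 2 p).mul (hF p).hasFDerivAt).fderiv
  change fderiv ℝ (fun q : Pt => q 2 * F q) p = _ at h
  rw [pd, h]
  fin_cases μ <;> simp [pd]

lemma xmul_diff (F : Pt → ℝ) (hF : Differentiable ℝ F) :
    Differentiable ℝ (fun q : Pt => q 2 * F q) :=
  fun p => ((coord_hasFDerivAt 2 p).mul (hF p).hasFDerivAt).differentiableAt

lemma pd_sub' (F G : Pt → ℝ) (hF : Differentiable ℝ F) (hG : Differentiable ℝ G)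
    (μ : Fin 4) (p : Pt) :
    pd μ (fun q => F q - G q) p = pd μ F p - pd μ G p := by
  have h := ((hF p).hasFDerivAt.sub (hG p).hasFDerivAt).fderiv
  change fderiv ℝ (fun q : Pt => F q - G q) p = _ at h
  rw [pd, h]
  simp [pd]

lemma uRex_eq (f : ℂ → ℂ) (hf : Differentiable ℂ f) (x y : ℝ) :
    uRex f (x, y) = 2 * (deriv f (x + y * Complex.I)).re := by
  let L : ℝ × ℝ →L[ℝ] ℂ := Complex.ofRealCLM.comp (ContinuousLinearMap.fst ℝ ℝ ℝ)
    + Complex.I • Complex.ofRealCLM.comp (ContinuousLinearMap.snd ℝ ℝ ℝ)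
  have hL : ∀ q, L q = q.1 + q.2 * Complex.I := by intro q; simp [L, mul_comm]
  have e : uRe f = fun q => 2 * (f (L q)).re := by funext q; rw [uRe, hL]
  have h1 := (((hf (L (x, y))).hasFDerivAt).restrictScalars ℝ).comp (x, y) L.hasFDerivAt
  have h2 := (Complex.reCLM.hasFDerivAt.comp (x, y) h1).const_mul 2
  have h3 := h2.fderiv
  change fderiv ℝ (fun q : ℝ × ℝ => 2 * (f (L q)).re) (x, y) = _ at h3
  rw [uRex, e, h3]
  simp [hL]

lemma profile_eq (f : ℂ → ℂ) (hf : Differentiable ℂ f) :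
    siklosProfile f = fun p => p 2 * reP (deriv f) p - reP f p := by
  funext p
  rw [siklosProfile, uRex_eq f hf]
  rfl

/-- Constant part of the pp metric. -/
def cA (μ ν : Fin 4) : ℝ :=
  if μ = 0 ∧ ν = 1 then 1 else if μ = 1 ∧ ν = 0 then 1
  else if μ = 2 ∧ ν = 2 then -1 else if μ = 3 ∧ ν = 3 then -1 else 0

/-- Coefficient of `H` in the pp metric. -/
def cB (μ ν : Fin 4) : ℝ := if μ = 1 ∧ ν = 1 then 1 else 0

/-- Kronecker delta. -/
def kd (μ ν : Fin 4) : ℝ := if μ = ν then 1 else 0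

/-- Explicit Christoffel symbols of the Siklos metric: coefficient of `1/x`. -/
def gA (l μ ν : Fin 4) : ℝ := -(kd l μ * kd ν 2) - kd l ν * kd μ 2 - cA μ ν * kd l 2
/-- Coefficient of `H/x`. -/
def gB (l μ ν : Fin 4) : ℝ := - cB μ ν * kd l 2
/-- Coefficient of `Hx` (with `i = 2`) and of `Hy` (with `i = 3`). -/
def gC (i l μ ν : Fin 4) : ℝ :=
  (kd l 0 * (kd μ 1 * kd ν i + kd μ i * kd ν 1) + kd l i * cB μ ν) / 2

lemma siklos_split (b : ℝ) (H : Pt → ℝ) (μ ν : Fin 4) :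
    siklosMetric b H μ ν = fun p => (b ^ 2 * (p 2) ^ 2)⁻¹ * (cA μ ν + cB μ ν * H p) := by
  funext p
  rw [siklosMetric]
  congr 1
  fin_cases μ <;> fin_cases ν <;> simp [ppMetric, cA, cB]

lemma pd_siklos (b : ℝ) (hb : 0 < b) (H : Pt → ℝ) (hH : Differentiable ℝ H) (ρ μ ν : Fin 4)
    (p : Pt) (hp : 0 < p 2) :
    pd ρ (siklosMetric b H μ ν) p =
      (b ^ 2 * (p 2) ^ 2)⁻¹ * (cB μ ν * pd ρ H p)
        - 2 * kd ρ 2 * (b ^ 2 * (p 2) ^ 3)⁻¹ * (cA μ ν + cB μ ν * H p) := by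
  have hx := hp.ne'
  have hb' := hb.ne'
  have h1 := ((coord_hasFDerivAt 2 p).pow 2).const_mul (b ^ 2)
  have h2 := (hasDerivAt_inv (x := b ^ 2 * (p 2) ^ 2) (by positivity)).comp_hasFDerivAt p h1
  have h3 := h2.mul (((hH p).hasFDerivAt.const_mul (cB μ ν)).const_add (cA μ ν))
  have h4 := h3.fderiv
  change fderiv ℝ (fun q : Pt => (b ^ 2 * (q 2) ^ 2)⁻¹ * (cA μ ν + cB μ ν * H q)) p = _ at h4
  rw [pd, siklos_split, h4]
  fin_cases ρ <;> simp [pd, kd]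
  field_simp
  ring

/-- Explicit Christoffel symbols. -/
def gG (H Hx Hy : Pt → ℝ) (l μ ν : Fin 4) (p : Pt) : ℝ :=
  (p 2)⁻¹ * (gA l μ ν + gB l μ ν * H p) + gC 2 l μ ν * Hx p + gC 3 l μ ν * Hy p

lemma pd_gG (H Hx Hy : Pt → ℝ) (hH : Differentiable ℝ H) (hHx : Differentiable ℝ Hx)
    (hHy : Differentiable ℝ Hy) (ρ l μ ν : Fin 4) (p : Pt) (hp : 0 < p 2) :
    pd ρ (gG H Hx Hy l μ ν) p =
      (p 2)⁻¹ * (gB l μ ν * pd ρ H p) - kd ρ 2 * ((p 2) ^ 2)⁻¹ * (gA l μ ν + gB l μ ν * H p)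
        + gC 2 l μ ν * pd ρ Hx p + gC 3 l μ ν * pd ρ Hy p := by
  have hx := hp.ne'
  have h2 := (hasDerivAt_inv hx).comp_hasFDerivAt p (coord_hasFDerivAt 2 p)
  have h3 := ((h2.mul (((hH p).hasFDerivAt.const_mul (gB l μ ν)).const_add (gA l μ ν))).add
    ((hHx p).hasFDerivAt.const_mul (gC 2 l μ ν))).add
    ((hHy p).hasFDerivAt.const_mul (gC 3 l μ ν))
  have h4 := h3.fderiv
  change fderiv ℝ (gG H Hx Hy l μ ν) p = _ at h4
  rw [pd, h4]
  fin_cases ρ <;> simp [pd, kd]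
  ring

lemma christoffel_eq (b : ℝ) (hb : 0 < b) (H : Pt → ℝ) (hH : Differentiable ℝ H)
    (h0 : ∀ p, pd 0 H p = 0) (h1 : ∀ p, pd 1 H p = 0) (l μ ν : Fin 4)
    (p : Pt) (hp : 0 < p 2) :
    Christoffel (siklosMetric b H) (siklosMetricInv b H) l μ ν p
      = gG H (pd 2 H) (pd 3 H) l μ ν p := by
  have hx := hp.ne'
  have hb' := hb.ne'
  simp only [Christoffel, pd_siklos b hb H hH _ _ _ p hp, Fin.sum_univ_four, siklosMetricInv, gG]
  fin_cases l <;> fin_cases μ <;> fin_cases ν <;>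
    simp [ppMetricInv, cA, cB, kd, gA, gB, gC, h0, h1] <;> field_simp <;> ring

lemma pd_christoffel (b : ℝ) (hb : 0 < b) (H : Pt → ℝ) (hH : Differentiable ℝ H)
    (h0 : ∀ p, pd 0 H p = 0) (h1 : ∀ p, pd 1 H p = 0) (ρ l μ ν : Fin 4)
    (p : Pt) (hp : 0 < p 2) :
    pd ρ (Christoffel (siklosMetric b H) (siklosMetricInv b H) l μ ν) p
      = pd ρ (gG H (pd 2 H) (pd 3 H) l μ ν) p := by
  have : Christoffel (siklosMetric b H) (siklosMetricInv b H) l μ ν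
      =ᶠ[nhds p] gG H (pd 2 H) (pd 3 H) l μ ν := by
    have ho : ∀ᶠ q : Pt in nhds p, 0 < q 2 :=
      (continuous_apply 2).continuousAt.eventually (lt_mem_nhds hp)
    filter_upwards [ho] with q hq
    exact christoffel_eq b hb H hH h0 h1 l μ ν q hq
  rw [pd, this.fderiv_eq, pd]

lemma ricci_general (b : ℝ) (hb : 0 < b) (H : Pt → ℝ) (hH : Differentiable ℝ H)
    (h0 : ∀ p, pd 0 H p = 0) (h1 : ∀ p, pd 1 H p = 0)
    (hHx : Differentiable ℝ (pd 2 H)) (hHy : Differentiable ℝ (pd 3 H))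
    (hx0 : ∀ p, pd 0 (pd 2 H) p = 0) (hx1 : ∀ p, pd 1 (pd 2 H) p = 0)
    (hy0 : ∀ p, pd 0 (pd 3 H) p = 0) (hy1 : ∀ p, pd 1 (pd 3 H) p = 0)
    (p : Pt) (hp : 0 < p 2)
    (hE : p 2 * (pd 2 (pd 2 H) p + pd 3 (pd 3 H) p) = 2 * pd 2 H p) (μ ν : Fin 4) :
    RicciT (siklosMetric b H) (siklosMetricInv b H) μ ν p = 3 * b ^ 2 * siklosMetric b H μ ν p := by
  have hx := hp.ne'
  have hb' := hb.ne'
  have hE' : pd 3 (pd 3 H) p = 2 * pd 2 H p / p 2 - pd 2 (pd 2 H) p := by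
    field_simp; linarith
  simp only [RicciT, pd_christoffel b hb H hH h0 h1 _ _ _ _ p hp,
    christoffel_eq b hb H hH h0 h1 _ _ _ p hp, pd_gG H _ _ hH hHx hHy _ _ _ _ p hp,
    siklos_split]
  fin_cases μ <;> fin_cases ν <;>
    simp [Fin.sum_univ_four, cA, cB, kd, gA, gB, gC, gG, h0, h1, hx0, hx1, hy0, hy1, hE'] <;>
    field_simp <;> ring

/-- for f holomorphic, the Siklos metric g = (b²x²)⁻¹ ĝ built from
Ĥ = x u_x − u, u = 2 Re f(x+iy), is Einstein on U = {x > 0}: R_{μν} = 3 b² g_{μν}. -/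
theorem siklos_ansatz_is_einstein (b : ℝ) (hb : 0 < b)
    (f : ℂ → ℂ) (hf : Differentiable ℂ f) :
    ∀ p : Pt, 0 < p 2 → ∀ μ ν : Fin 4,
      RicciT (siklosMetric b (siklosProfile f)) (siklosMetricInv b (siklosProfile f)) μ ν p
        = 3 * b ^ 2 * siklosMetric b (siklosProfile f) μ ν p := by
  intro p hp μ ν
  have d1 : Differentiable ℂ (deriv f) := hf.deriv
  have d2 : Differentiable ℂ (deriv (deriv f)) := d1.deriv
  have e1 : Differentiable ℂ (fun z => Complex.I * deriv f z) := d1.const_mul _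
  have e2 : Differentiable ℂ (fun z => Complex.I * deriv (deriv f) z) := d2.const_mul _
  have hpd : ∀ ρ q, pd ρ (siklosProfile f) q
      = q 2 * pd ρ (reP (deriv f)) q + (if ρ = 2 then reP (deriv f) q else 0)
        - pd ρ (reP f) q := by
    intro ρ q
    rw [profile_eq f hf, pd_sub' _ _ (xmul_diff _ (reP_diff _ d1)) (reP_diff _ hf),
      pd_xmul _ (reP_diff _ d1)]
  have hHx : pd 2 (siklosProfile f) = fun q => q 2 * reP (deriv (deriv f)) q := by
    funext q
    rw [hpd, pd_reP _ d1, pd_reP _ hf]; simp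
  have hHy : pd 3 (siklosProfile f) = fun q =>
      q 2 * reP (fun z => Complex.I * deriv (deriv f) z) q
        - reP (fun z => Complex.I * deriv f z) q := by
    funext q
    rw [hpd, pd_reP _ d1, pd_reP _ hf]; simp
  have hHxx : ∀ ρ q, pd ρ (pd 2 (siklosProfile f)) q = q 2 * pd ρ (reP (deriv (deriv f))) q
      + (if ρ = 2 then reP (deriv (deriv f)) q else 0) := by
    intro ρ q
    rw [hHx, pd_xmul _ (reP_diff _ d2)]
  have hHyy : ∀ ρ q, pd ρ (pd 3 (siklosProfile f)) q
      = q 2 * pd ρ (reP (fun z => Complex.I * deriv (deriv f) z)) q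
        + (if ρ = 2 then reP (fun z => Complex.I * deriv (deriv f) z) q else 0)
        - pd ρ (reP (fun z => Complex.I * deriv f z)) q := by
    intro ρ q
    rw [hHy, pd_sub' _ _ (xmul_diff _ (reP_diff _ e2)) (reP_diff _ e1),
      pd_xmul _ (reP_diff _ e2)]
  have c1 : deriv (fun z => Complex.I * deriv f z) = fun z => Complex.I * deriv (deriv f) z := by
    funext z; exact deriv_const_mul _ (d1 z)
  have c2 : deriv (fun z => Complex.I * deriv (deriv f) z)
      = fun z => Complex.I * deriv (deriv (deriv f)) z := by
    funext z; exact deriv_const_mul _ (d2 z)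
  apply ricci_general b hb _ _ _ _ _ _ _ _ _ _ p hp
  · simp only [hHxx, hHyy]
    rw [pd_reP _ d2, pd_reP _ e2, pd_reP _ e1, c1, c2, hHx]
    simp [reP]
    ring
  · rw [profile_eq f hf]
    exact (xmul_diff _ (reP_diff _ d1)).sub (reP_diff _ hf)
  · intro q; rw [hpd, pd_reP _ d1, pd_reP _ hf]; simp
  · intro q; rw [hpd, pd_reP _ d1, pd_reP _ hf]; simp
  · rw [hHx]; exact xmul_diff _ (reP_diff _ d2)
  · rw [hHy]; exact (xmul_diff _ (reP_diff _ e2)).sub (reP_diff _ e1)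
  · intro q; rw [hHxx, pd_reP _ d2]; simp
  · intro q; rw [hHxx, pd_reP _ d2]; simp
  · intro q; rw [hHyy, pd_reP _ e2, pd_reP _ e1]; simp
  · intro q; rw [hHyy, pd_reP _ e2, pd_reP _ e1]; simp
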